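/- arXiv:2305.12869 — 13 statements merged into one kernel-verified Lean document; each statement's English description precedes it below -/
import Mathlib

section
/- Let A be a commutative Gelfand–Dorfman algebra. Then A satisfies the transposed Poisson identity: 2([x,y]⋅z) = [x⋅z, y] + [x, y⋅z] for all x, y, z ∈ A. -/
theorem stmt_1 {K A : Type*} [Field K] [CharZero K] [AddCommGroup A] [Module K A]
    (mul : A →ₗ[K] A →ₗ[K] A) (br : A →ₗ[K] A →ₗ[K] A)
    (hmul_comm : ∀ x y : A, mul x y = mul y x)
    (hmul_assoc : ∀ x y z : A, mul (mul x y) z = mul x (mul y z))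
    (hbr_anti : ∀ x y : A, br x y = - br y x)
    (hbr_jacobi : ∀ x y z : A, br (br x y) z + br (br y z) x + br (br z x) y = 0)
    (hgd : ∀ x y z : A,
      br x (mul y z) - br z (mul y x) + mul (br y x) z - mul (br y z) x - mul (br x z) y = 0) :
    ∀ x y z : A, 2 • mul (br x y) z = br (mul x z) y + br x (mul y z) := by
  intro x y z
  have h1 := hgd x y z
  have h2 := hgd y z x
  have h3 := hgd z x y
  rw [hbr_anti x z, hbr_anti y x] at h1
  rw [hbr_anti y x, hbr_anti z y] at h2
  rw [hbr_anti z y, hbr_anti x z] at h3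
  rw [hmul_comm y x] at h1
  rw [hmul_comm z x, hmul_comm z y] at h2
  rw [hmul_comm x z] at h3
  rw [hmul_comm z x] at h3
  rw [hbr_anti (mul x z) y]
  simp only [map_neg, LinearMap.neg_apply] at h1 h2 h3
  rw [two_smul]
  have h4 : mul (br x y) z + mul (br y z) x + mul (br z x) y = 0 := by
    rw [← neg_eq_zero, ← add_zero (0 : A), ← h1]
    grind
  grind
end

section
/- Let A be a transposed Poisson algebra. Then A satisfies the commutative Gelfand–Dorfman identity: [x, y⋅z] − [z, y⋅x] + [y,x]⋅z − [y,z]⋅x − [x,z]⋅y = 0 for all x, y, z ∈ A. Hence the variety of commutative Gelfand–Dorfman algebras coincides with the variety of transposed Poisson algebras. -/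
theorem stmt_2 {K A : Type*} [Field K] [CharZero K] [AddCommGroup A] [Module K A]
    (mul : A →ₗ[K] A →ₗ[K] A) (br : A →ₗ[K] A →ₗ[K] A)
    (hmul_comm : ∀ x y : A, mul x y = mul y x)
    (hmul_assoc : ∀ x y z : A, mul (mul x y) z = mul x (mul y z))
    (hbr_anti : ∀ x y : A, br x y = - br y x)
    (hbr_jacobi : ∀ x y z : A, br (br x y) z + br (br y z) x + br (br z x) y = 0)
    (htp : ∀ x y z : A, 2 • mul (br x y) z = br (mul x z) y + br x (mul y z)) :
    ∀ x y z : A,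
      br x (mul y z) - br z (mul y x) + mul (br y x) z - mul (br y z) x - mul (br x z) y = 0 := by
  intro x y z
  have h1 := htp x y z
  have h2 := htp y z x
  have h3 := htp x z y
  rw [hbr_anti (mul x z) y, ← sub_eq_neg_add] at h1
  rw [hbr_anti (mul y x) z, hmul_comm z x, ← sub_eq_neg_add] at h2
  rw [hbr_anti (mul x y) z, hmul_comm z y, hmul_comm x y, ← sub_eq_neg_add] at h3
  have h4 : mul (br y x) z = - mul (br x y) z := by
    rw [hbr_anti y x, map_neg, LinearMap.neg_apply]
  rw [h4]
  have h5 : (2 : K) • (br x (mul y z) - br z (mul y x) + - mul (br x y) z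
      - mul (br y z) x - mul (br x z) y) = 0 := by
    rw [two_smul]
    have e : ∀ a c p q r b : A, p + p = a - b → q + q = b - c → r + r = a - c →
        (a - c + -p - q - r) + (a - c + -p - q - r) = 0 := by
      intro a c p q r b hp hq hr
      have : (a - c + -p - q - r) + (a - c + -p - q - r)
        = (a - c) + (a - c) - (p + p) - (q + q) - (r + r) := by abel
      rw [this, hp, hq, hr]; abel
    exact e _ _ _ _ _ _ (by rw [← two_nsmul]; exact h1) (by rw [← two_nsmul]; exact h2)
      (by rw [← two_nsmul]; exact h3)
  exact (smul_eq_zero.mp h5).resolve_left two_ne_zero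
end

section
/- Every transposed Poisson algebra is an F-manifold algebra; that is, for all a₁, a₂, a₃, a₄ in a transposed Poisson algebra A, the identity [a₁⋅a₂, a₃⋅a₄] = [a₁⋅a₂, a₃]⋅a₄ + [a₁⋅a₂, a₄]⋅a₃ + a₁⋅[a₂, a₃⋅a₄] + a₂⋅[a₁, a₃⋅a₄] − (a₁⋅a₃)⋅[a₂,a₄] − (a₂⋅a₃)⋅[a₁,a₄] − (a₂⋅a₄)⋅[a₁,a₃] − (a₁⋅a₄)⋅[a₂,a₃] holds. -/
theorem stmt_3 {K A : Type*} [Field K] [CharZero K] [AddCommGroup A] [Module K A]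
    (mul : A →ₗ[K] A →ₗ[K] A) (br : A →ₗ[K] A →ₗ[K] A)
    (hmul_comm : ∀ x y : A, mul x y = mul y x)
    (hmul_assoc : ∀ x y z : A, mul (mul x y) z = mul x (mul y z))
    (hbr_anti : ∀ x y : A, br x y = - br y x)
    (hbr_jacobi : ∀ x y z : A, br (br x y) z + br (br y z) x + br (br z x) y = 0)
    (htp : ∀ x y z : A, 2 • mul (br x y) z = br (mul x z) y + br x (mul y z)) :
    ∀ a1 a2 a3 a4 : A,
      br (mul a1 a2) (mul a3 a4) =
        mul (br (mul a1 a2) a3) a4 + mul (br (mul a1 a2) a4) a3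
        + mul a1 (br a2 (mul a3 a4)) + mul a2 (br a1 (mul a3 a4))
        - mul (mul a1 a3) (br a2 a4) - mul (mul a2 a3) (br a1 a4)
        - mul (mul a2 a4) (br a1 a3) - mul (mul a1 a4) (br a2 a3) := by
  have lc : ∀ x y z : A, mul x (mul y z) = mul y (mul x z) := fun x y z => by
    rw [← hmul_assoc, hmul_comm x y, hmul_assoc]
  have L1 : ∀ x y z w : A, mul (mul z w) (br x y)
      = (1/2 : K) • (br (mul x (mul z w)) y - br (mul y (mul z w)) x) := fun x y z w => by
    have h := htp x y (mul z w)
    rw [hbr_anti x (mul y _), hmul_comm (br x y)] at h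
    linear_combination (norm := module) (1/2 : K) • h
  have L2 : ∀ x y z w : A, mul (br (mul x w) y) z
      = (1/2 : K) • (br (mul x (mul w z)) y + br (mul x w) (mul y z)) := fun x y z w => by
    have h := htp (mul x w) y z
    rw [hmul_assoc] at h
    linear_combination (norm := module) (1/2 : K) • h
  have K1 : ∀ x y z w : A, br (mul x (mul z w)) y - br (mul y (mul z w)) x
      = br (mul x z) (mul y w) + br (mul x w) (mul y z) := fun x y z w => by
    have h := congrArg (fun t => mul t w) (htp x y z)
    simp only [map_add, map_nsmul, LinearMap.add_apply, LinearMap.smul_apply] at h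
    rw [hbr_anti x (mul y z), map_neg, LinearMap.neg_apply, L2, L2, hmul_assoc, hmul_comm (br x y),
      L1, hbr_anti (mul y z)] at h
    linear_combination (norm := module) (2 : K) • h
  intro a b c d
  have k1 := K1 a c b d
  have k2 := K1 b d a c
  rw [L2, L2, hmul_comm a (br _ _), hmul_comm b (br _ _), hbr_anti b (mul c d),
    hbr_anti a (mul c d), map_neg, map_neg, LinearMap.neg_apply, LinearMap.neg_apply, L2, L2,
    L1, L1, L1, L1, hbr_anti (mul c d) (mul b a), hbr_anti (mul c d) (mul a b)]
  rw [hbr_anti (mul b c) (mul d a)] at k2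
  simp only [hmul_comm, lc] at k1 k2 ⊢
  linear_combination (norm := module) (1/2 : K) • k1 + (1/2 : K) • k2
end

section
/- Every transposed Poisson algebra satisfies the first special Gelfand–Dorfman identity: [x₁, (x₂⋅x₃)⋅x₄] − [x₁, x₂⋅x₃]⋅x₄ − [x₁, x₂⋅x₄]⋅x₃ + ([x₁,x₂]⋅x₃)⋅x₄ = 0 for all x₁, x₂, x₃, x₄ ∈ A. -/
theorem stmt_4 {K A : Type*} [Field K] [CharZero K] [AddCommGroup A] [Module K A]
    (mul : A →ₗ[K] A →ₗ[K] A) (br : A →ₗ[K] A →ₗ[K] A)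
    (hmul_comm : ∀ x y : A, mul x y = mul y x)
    (hmul_assoc : ∀ x y z : A, mul (mul x y) z = mul x (mul y z))
    (hbr_anti : ∀ x y : A, br x y = - br y x)
    (hbr_jacobi : ∀ x y z : A, br (br x y) z + br (br y z) x + br (br z x) y = 0)
    (htp : ∀ x y z : A, 2 • mul (br x y) z = br (mul x z) y + br x (mul y z)) :
    ∀ x1 x2 x3 x4 : A,
      br x1 (mul (mul x2 x3) x4) - mul (br x1 (mul x2 x3)) x4
        - mul (br x1 (mul x2 x4)) x3 + mul (mul (br x1 x2) x3) x4 = 0 := by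
  intro a b c d
  have Q := htp a (mul b d) c
  have R := htp a b (mul c d)
  have S := congrArg (fun t => mul t d) (htp a b c)
  have T := htp (mul a c) b d
  have e1 : mul (mul b d) c = mul (mul b c) d := by
    rw [hmul_assoc, hmul_assoc, hmul_comm d c]
  rw [e1] at Q
  rw [← hmul_assoc, ← hmul_assoc, ← hmul_assoc] at R
  have S' : 2 • mul (mul (br a b) c) d = mul (br (mul a c) b) d + mul (br a (mul b c)) d := by
    simpa using S
  have h : (2 : K) • (br a (mul (mul b c) d) - mul (br a (mul b c)) d
        - mul (br a (mul b d)) c + mul (mul (br a b) c) d) = 0 := by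
    linear_combination (norm := module) (2 : K) • S' + T - Q - R
  exact (smul_eq_zero.mp h).resolve_left two_ne_zero
end

section
/- Every transposed Poisson algebra satisfies the second special Gelfand–Dorfman identity: [x₄⋅x₁, x₃⋅x₂] − [x₃⋅x₁, x₄⋅x₂] + [x₃, x₄⋅x₁]⋅x₂ − [x₄, x₃⋅x₂]⋅x₁ − [x₄, x₃⋅x₁]⋅x₂ + [x₃, x₄⋅x₂]⋅x₁ + 2(([x₄,x₃]⋅x₁)⋅x₂) = 0 for all x₁, x₂, x₃, x₄ ∈ A. -/
theorem stmt_5 {K A : Type*} [Field K] [CharZero K] [AddCommGroup A] [Module K A]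
    (mul : A →ₗ[K] A →ₗ[K] A) (br : A →ₗ[K] A →ₗ[K] A)
    (hmul_comm : ∀ x y : A, mul x y = mul y x)
    (hmul_assoc : ∀ x y z : A, mul (mul x y) z = mul x (mul y z))
    (hbr_anti : ∀ x y : A, br x y = - br y x)
    (hbr_jacobi : ∀ x y z : A, br (br x y) z + br (br y z) x + br (br z x) y = 0)
    (htp : ∀ x y z : A, 2 • mul (br x y) z = br (mul x z) y + br x (mul y z)) :
    ∀ x1 x2 x3 x4 : A,
      br (mul x4 x1) (mul x3 x2) - br (mul x3 x1) (mul x4 x2)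
        + mul (br x3 (mul x4 x1)) x2 - mul (br x4 (mul x3 x2)) x1
        - mul (br x4 (mul x3 x1)) x2 + mul (br x3 (mul x4 x2)) x1
        + 2 • mul (mul (br x4 x3) x1) x2 = 0 := by
  intro x1 x2 x3 x4
  have key : ∀ e : A, (2 : ℕ) • e = 0 → e = 0 := by
    intro e he
    have h : (2 : K) • e = 0 := by
      rw [two_smul, ← two_nsmul]; exact he
    exact (smul_eq_zero.mp h).resolve_left two_ne_zero
  apply key
  have e1 := htp x3 (mul x4 x1) x2
  have e2 := htp x4 (mul x3 x2) x1
  have e3 := htp x4 (mul x3 x1) x2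
  have e4 := htp x3 (mul x4 x2) x1
  have e5 := htp x4 x3 (mul x1 x2)
  rw [← hmul_assoc, ← hmul_assoc, ← hmul_assoc] at e5
  have c (a b c : A) : mul (mul a b) c = mul (mul a c) b := by
    rw [hmul_assoc, hmul_comm b c, ← hmul_assoc]
  rw [c x3 x2 x1] at e2
  rw [c x4 x2 x1] at e4
  have a1 := hbr_anti (mul x3 x2) (mul x4 x1)
  have a2 := hbr_anti (mul x4 x2) (mul x3 x1)
  have a3 := hbr_anti (mul (mul x4 x1) x2) x3
  simp only [smul_add, smul_sub, e1, e2, e3, e4, e5, a1, a2, a3]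
  abel
end

section
/- Let A be a transposed Poisson algebra. Then for all x, y, z ∈ A, [x,y]⋅z = [x,z]⋅y − x⋅[y,z]. -/
theorem stmt_6 {K A : Type*} [Field K] [CharZero K] [AddCommGroup A] [Module K A]
    (mul : A →ₗ[K] A →ₗ[K] A) (br : A →ₗ[K] A →ₗ[K] A)
    (hmul_comm : ∀ x y : A, mul x y = mul y x)
    (hmul_assoc : ∀ x y z : A, mul (mul x y) z = mul x (mul y z))
    (hbr_anti : ∀ x y : A, br x y = - br y x)
    (hbr_jacobi : ∀ x y z : A, br (br x y) z + br (br y z) x + br (br z x) y = 0)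
    (htp : ∀ x y z : A, 2 • mul (br x y) z = br (mul x z) y + br x (mul y z)) :
    ∀ x y z : A, mul (br x y) z = mul (br x z) y - mul x (br y z) := by
  intro x y z
  have h1 := htp x y z
  have h2 := htp y z x
  have h3 := htp z x y
  rw [hmul_comm y x, hmul_comm z x, hbr_anti y (mul x z)] at h2
  rw [hmul_comm z y, hbr_anti (mul y z) x, hbr_anti z (mul x y)] at h3
  have e : (2 : K) • (mul (br x y) z + mul (br y z) x + mul (br z x) y) = 0 := by
    rw [two_smul]
    rw [two_nsmul] at h1 h2 h3
    have : (mul (br x y) z + mul (br x y) z) + (mul (br y z) x + mul (br y z) x)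
        + (mul (br z x) y + mul (br z x) y) = 0 := by
      rw [h1, h2, h3]; abel
    rw [← this]; abel
  have e2 := (smul_eq_zero.mp e).resolve_left two_ne_zero
  rw [hbr_anti z x, map_neg, LinearMap.neg_apply, hmul_comm (br y z) x] at e2
  rw [← sub_eq_zero, ← e2]
  abel
end

section
/- Let A be a transposed Poisson algebra. Then for all x₁, x₂, x₃, x₄ ∈ A, [x₁,x₄]⋅[x₂,x₃] = [x₁,x₃]⋅[x₂,x₄] − [x₁,[x₃,x₄]]⋅x₂ + x₁⋅[x₂,[x₃,x₄]]. -/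
theorem stmt_8 {K A : Type*} [Field K] [CharZero K] [AddCommGroup A] [Module K A]
    (mul : A →ₗ[K] A →ₗ[K] A) (br : A →ₗ[K] A →ₗ[K] A)
    (hmul_comm : ∀ x y : A, mul x y = mul y x)
    (hmul_assoc : ∀ x y z : A, mul (mul x y) z = mul x (mul y z))
    (hbr_anti : ∀ x y : A, br x y = - br y x)
    (hbr_jacobi : ∀ x y z : A, br (br x y) z + br (br y z) x + br (br z x) y = 0)
    (htp : ∀ x y z : A, 2 • mul (br x y) z = br (mul x z) y + br x (mul y z)) :
    ∀ x1 x2 x3 x4 : A,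
      mul (br x1 x4) (br x2 x3) =
        mul (br x1 x3) (br x2 x4) - mul (br x1 (br x3 x4)) x2 + mul x1 (br x2 (br x3 x4)) := by
  intro x1 x2 x3 x4
  have a1 : ∀ a b, br (br a b) x1 = - br x1 (br a b) := fun a b => hbr_anti _ _
  have m1 : ∀ a b, br (mul a b) x1 = - br x1 (mul a b) := fun a b => hbr_anti _ _
  have a2 : ∀ a b, br (br a b) x2 = - br x2 (br a b) := fun a b => hbr_anti _ _
  have m2 : ∀ a b, br (mul a b) x2 = - br x2 (mul a b) := fun a b => hbr_anti _ _
  have a3 : ∀ a b, br (br a b) x3 = - br x3 (br a b) := fun a b => hbr_anti _ _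
  have m3 : ∀ a b, br (mul a b) x3 = - br x3 (mul a b) := fun a b => hbr_anti _ _
  have a4 : ∀ a b, br (br a b) x4 = - br x4 (br a b) := fun a b => hbr_anti _ _
  have m4 : ∀ a b, br (mul a b) x4 = - br x4 (mul a b) := fun a b => hbr_anti _ _
  have n : ∀ a b c d, br (mul a b) (br c d) = - br (br c d) (mul a b) := fun a b c d => hbr_anti _ _
  have e0 := htp (br x1 x3) x4 x2
  have e1 := congrArg (fun t => br t x3) (htp x1 x4 x2)
  have e2 := htp (br x3 x4) x2 x1
  have e3 := congrArg (fun t => br t x4) (htp x1 x3 x2)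
  have e4 := congrArg (fun t => mul t x2) (hbr_jacobi x1 x3 x4)
  have e5 := congrArg (fun t => br t x2) (htp x1 x4 x3)
  have e6 := congrArg (fun t => br t x2) (htp x3 x4 x1)
  have e7 := htp x2 x3 (br x1 x4)
  have e8 := hbr_jacobi (mul x2 x4) x1 x3
  have e9 := hbr_jacobi (mul x1 x2) x3 x4
  have e10 := htp (br x3 x4) x1 x2
  have e11 := congrArg (fun t => br t x2) (htp x1 x3 x4)
  have e12 := htp x2 x4 (br x1 x3)
  have e13 := htp (br x1 x4) x3 x2
  have e14 := congrArg (fun t => br t x1) (htp x3 x4 x2)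
  have e15 := hbr_jacobi (mul x2 x3) x1 x4
  simp only [map_add, map_neg, map_zero, map_nsmul, LinearMap.add_apply, LinearMap.neg_apply, LinearMap.smul_apply,
    LinearMap.zero_apply, neg_neg, n, a1, a2, a3, a4, m1, m2, m3, m4,
    hmul_comm, hbr_anti x2 x1, hbr_anti x3 x1, hbr_anti x3 x2, hbr_anti x4 x1, hbr_anti x4 x2, hbr_anti x4 x3]
    at e0 e1 e2 e3 e4 e5 e6 e7 e8 e9 e10 e11 e12 e13 e14 e15 ⊢
  linear_combination (norm := skip) (-1/2 : K) • e0 +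
    (1/2 : K) • e1 +
    (1/2 : K) • e2 +
    (-1/2 : K) • e3 +
    (1 : K) • e4 +
    (-1/4 : K) • e5 +
    (1/4 : K) • e6 +
    (1/2 : K) • e7 +
    (-1/2 : K) • e8 +
    (-1/2 : K) • e9 +
    (-1 : K) • e10 +
    (1/4 : K) • e11 +
    (-1/2 : K) • e12 +
    (1/2 : K) • e13 +
    (-1/2 : K) • e14 +
    (1/2 : K) • e15
  module
end

section
/- Let A be a transposed Poisson algebra. Then for all x₁, x₂, x₃, x₄ ∈ A, [x₁,x₃]⋅(x₂⋅x₄) = [x₁, x₂⋅(x₃⋅x₄)] + 3(x₁⋅([x₂,x₄]⋅x₃)) − 2(x₁⋅[x₂, x₃⋅x₄]) − 2(x₁⋅(x₂⋅[x₃,x₄])). -/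
theorem stmt_9 {K A : Type*} [Field K] [CharZero K] [AddCommGroup A] [Module K A]
    (mul : A →ₗ[K] A →ₗ[K] A) (br : A →ₗ[K] A →ₗ[K] A)
    (hmul_comm : ∀ x y : A, mul x y = mul y x)
    (hmul_assoc : ∀ x y z : A, mul (mul x y) z = mul x (mul y z))
    (hbr_anti : ∀ x y : A, br x y = - br y x)
    (hbr_jacobi : ∀ x y z : A, br (br x y) z + br (br y z) x + br (br z x) y = 0)
    (htp : ∀ x y z : A, 2 • mul (br x y) z = br (mul x z) y + br x (mul y z)) :
    ∀ x1 x2 x3 x4 : A,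
      mul (br x1 x3) (mul x2 x4) =
        br x1 (mul x2 (mul x3 x4)) + 3 • mul x1 (mul (br x2 x4) x3)
        - 2 • mul x1 (br x2 (mul x3 x4)) - 2 • mul x1 (mul x2 (br x3 x4)) := by
  intro a b c d
  have lc : ∀ x y z : A, mul x (mul y z) = mul y (mul x z) := fun x y z => by
    rw [← hmul_assoc, hmul_comm x y, hmul_assoc]
  have key : ∀ a b c d : A, br (mul a (mul c d)) b + br a (mul b (mul c d))
      = br (mul a c) (mul b d) + br (mul a d) (mul b c) := by
    intro a b c d
    have h1 := htp a b (mul c d)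
    have h2 := congrArg (fun t => mul t d) (htp a b c)
    simp only [map_add, LinearMap.add_apply, LinearMap.smul_apply, map_nsmul,
      hmul_assoc] at h2
    have h3 := htp (mul a c) b d
    have h4 := htp a (mul b c) d
    simp only [hmul_assoc] at h3 h4
    linear_combination (norm := module) (-2 : K) • h1 + (2 : K) • h2 + h3 + h4
  have k1 := key a c b d
  have k2 := key b d a c
  have p1 := htp a c (mul b d)
  have p2 := htp b d (mul a c)
  have p3 := htp c d (mul a b)
  have s1 := htp b (mul c d) a
  have e1 : mul a (mul (br b d) c) = mul (br b d) (mul a c) := lc _ _ _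
  have e2 : mul a (mul b (br c d)) = mul (br c d) (mul a b) := by
    rw [← hmul_assoc, hmul_comm]
  have e3 : mul a (br b (mul c d)) = mul (br b (mul c d)) a := hmul_comm _ _
  rw [e1, e2, e3]
  have c1 : mul b a = mul a b := hmul_comm _ _
  have c2 : mul d c = mul c d := hmul_comm _ _
  have c3 : mul c b = mul b c := hmul_comm _ _
  have c4 : mul d a = mul a d := hmul_comm _ _
  have c5 : mul (mul c d) a = mul a (mul c d) := hmul_comm _ _
  have c6 : mul c (mul b d) = mul b (mul c d) := lc _ _ _
  have c7 : mul d (mul a c) = mul a (mul c d) := by rw [lc, c2]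
  have c8 : mul c (mul a b) = mul a (mul b c) := by rw [lc, c3]
  have c9 : mul d (mul a b) = mul a (mul b d) := by rw [lc, hmul_comm d b]
  have c10 : mul b (mul a c) = mul a (mul b c) := lc _ _ _
  simp only [c1, c2, c3, c4, c5, c6, c7, c8, c9, c10] at *
  have t1 := hbr_anti (mul a (mul b d)) c
  have t2 := hbr_anti (mul a (mul b c)) d
  have t3 := hbr_anti (mul a d) (mul b c)
  rw [t1] at k1 p1
  rw [t2] at k2 p2 p3
  rw [t3] at k1
  linear_combination (norm := module) (1/2 : K) • p1 - (3/2 : K) • p2 + p3 + s1 - (1/2 : K) • k1 - (1/2 : K) • k2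
end

section
/- Let A be a transposed Poisson algebra. Then for all x₁, x₂, x₃, x₄ ∈ A, [x₁,x₄]⋅(x₂⋅x₃) = [x₁, x₂⋅(x₃⋅x₄)] + 3(x₁⋅([x₂,x₄]⋅x₃)) − 2(x₁⋅[x₂, x₃⋅x₄]) − x₁⋅(x₂⋅[x₃,x₄]). -/
theorem stmt_10 {K A : Type*} [Field K] [CharZero K] [AddCommGroup A] [Module K A]
    (mul : A →ₗ[K] A →ₗ[K] A) (br : A →ₗ[K] A →ₗ[K] A)
    (hmul_comm : ∀ x y : A, mul x y = mul y x)
    (hmul_assoc : ∀ x y z : A, mul (mul x y) z = mul x (mul y z))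
    (hbr_anti : ∀ x y : A, br x y = - br y x)
    (hbr_jacobi : ∀ x y z : A, br (br x y) z + br (br y z) x + br (br z x) y = 0)
    (htp : ∀ x y z : A, 2 • mul (br x y) z = br (mul x z) y + br x (mul y z)) :
    ∀ x1 x2 x3 x4 : A,
      mul (br x1 x4) (mul x2 x3) =
        br x1 (mul x2 (mul x3 x4)) + 3 • mul x1 (mul (br x2 x4) x3)
        - 2 • mul x1 (br x2 (mul x3 x4)) - mul x1 (mul x2 (br x3 x4)) := by
  have lc : ∀ x y z : A, mul x (mul y z) = mul y (mul x z) := fun x y z => by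
    rw [← hmul_assoc, hmul_comm x y, hmul_assoc]
  have L : ∀ x y z w : A, 2 • mul (br x y) (mul z w) =
      br x (mul y (mul z w)) - br y (mul x (mul z w)) := fun x y z w => by
    rw [htp, hbr_anti (mul x (mul z w)) y]; abel
  have N : ∀ x y z w : A, 2 • mul (br x (mul y z)) w =
      br (mul x w) (mul y z) + br x (mul y (mul z w)) := fun x y z w => by
    rw [htp, hmul_assoc]
  have P : ∀ x y z w : A, 2 • mul (br x y) (mul z w) =
      mul (br x (mul y z)) w - mul (br y (mul x z)) w := fun x y z w => by
    rw [← hmul_assoc, ← LinearMap.smul_apply, ← map_nsmul, htp, hbr_anti (mul x z) y]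
    simp only [map_add, map_neg, LinearMap.add_apply, LinearMap.neg_apply]
    abel
  have E : ∀ x y z w : A, br x (mul y (mul z w)) - br y (mul x (mul z w)) =
      br (mul x w) (mul y z) + br (mul x z) (mul y w) := fun x y z w => by
    have h1 := L x y z w
    have h2 := P x y z w
    have h3 := N x y z w
    have h4 := N y x z w
    rw [hbr_anti (mul y w) (mul x z)] at h4
    linear_combination (norm := module) (-2 : K) • h1 + (2 : K) • h2 + h3 - h4
  intro a b c d
  have e2 := E a b c d
  have e3 := E a c b d
  have e4 := E a d b c
  have l14 := L a d b c
  have l24 := L b d a c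
  have l34 := L c d a b
  have n := N b c d a
  simp only [hmul_comm, lc, hmul_assoc] at e2 e3 e4 l14 l24 l34 n ⊢
  linear_combination (norm := module) (1/2 : K) • l14 - (3/2 : K) • l24 + n + (1/2 : K) • l34
    - (1/2 : K) • e3 - (1/2 : K) • e4 + (1/2 : K) • e2
end

section
/- Let A be a transposed Poisson algebra. Then for all x₁, x₂, x₃, x₄ ∈ A, [x₁, x₃⋅x₄]⋅x₂ = [x₁, x₂⋅(x₃⋅x₄)] + 2(x₁⋅([x₂,x₄]⋅x₃)) − x₁⋅[x₂, x₃⋅x₄] − x₁⋅(x₂⋅[x₃,x₄]). -/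
theorem stmt_11 {K A : Type*} [Field K] [CharZero K] [AddCommGroup A] [Module K A]
    (mul : A →ₗ[K] A →ₗ[K] A) (br : A →ₗ[K] A →ₗ[K] A)
    (hmul_comm : ∀ x y : A, mul x y = mul y x)
    (hmul_assoc : ∀ x y z : A, mul (mul x y) z = mul x (mul y z))
    (hbr_anti : ∀ x y : A, br x y = - br y x)
    (hbr_jacobi : ∀ x y z : A, br (br x y) z + br (br y z) x + br (br z x) y = 0)
    (htp : ∀ x y z : A, 2 • mul (br x y) z = br (mul x z) y + br x (mul y z)) :
    ∀ x1 x2 x3 x4 : A,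
      mul (br x1 (mul x3 x4)) x2 =
        br x1 (mul x2 (mul x3 x4)) + 2 • mul x1 (mul (br x2 x4) x3)
        - mul x1 (br x2 (mul x3 x4)) - mul x1 (mul x2 (br x3 x4)) := by
  have lc : ∀ x y z : A, mul x (mul y z) = mul y (mul x z) := fun x y z => by
    rw [← hmul_assoc, hmul_comm x y, hmul_assoc]
  -- `2 [x,y] z w = [x, y z w] - [y, x z w]`
  have D : ∀ x y z w : A, 2 • mul z (mul w (br x y)) =
      br x (mul y (mul z w)) - br y (mul x (mul z w)) := fun x y z w => by
    rw [← hmul_assoc z w, hmul_comm (mul z w), htp, hbr_anti (mul x (mul z w)) y]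
    abel
  have T : ∀ x u z : A, 2 • mul z (br x u) = br (mul x z) u + br x (mul z u) :=
    fun x u z => by rw [hmul_comm z, htp, hmul_comm u z]
  have E : ∀ x y z w : A, br x (mul y (mul z w)) - br y (mul x (mul z w)) =
      br (mul x w) (mul y z) + br (mul x z) (mul y w) := fun x y z w => by
    have h1 := D x y w z
    have h2 := congrArg (mul w) (htp x y z)
    rw [map_nsmul, map_add] at h2
    have h3 := T x (mul y z) w
    have h4 := T y (mul x z) w
    rw [hbr_anti (mul x z) y, map_neg] at h2
    have e1 := hbr_anti (mul y w) (mul x z)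
    rw [hmul_comm (br x y) z] at h2
    rw [lc w y z, hmul_comm w z] at h3
    rw [lc w x z, hmul_comm w z] at h4
    rw [hmul_comm w z] at h1
    linear_combination (norm := module) (-2 : K) • h1 + (2 : K) • h2 + h3 - h4 - e1
  intro a b c d
  have h1 := T a (mul c d) b
  have h2 := T b (mul c d) a
  have h3 := D b d a c
  have h4 := D c d a b
  have h5 := E a c b d
  have h6 := E b d a c
  have e1 := hbr_anti (mul b c) (mul d a)
  rw [hmul_comm b a] at h2
  rw [hmul_comm (br a _) b, hmul_comm (br b d) c]
  rw [lc d a c, hmul_comm d c] at h3 h6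
  rw [lc d a b, lc c a b, hmul_comm d b, hmul_comm c b] at h4
  rw [lc c b d] at h5
  rw [hmul_comm c b] at h5
  rw [lc b a c, hmul_comm b a] at h6
  rw [hmul_comm d a] at h6 e1
  rw [lc b a c] at h3
  rw [hbr_anti (mul b c)] at h6
  linear_combination (norm := module) (1/2 : K) • h1 + (1/2 : K) • h2 - h3 + (1/2 : K) • h4 - (1/2 : K) • h5 - (1/2 : K) • h6
end

section
/- Let A be a transposed Poisson algebra. Then for all x₁, x₂, x₃, x₄ ∈ A, [[x₁,x₃], x₂⋅x₄] = [[x₁, x₃⋅x₄], x₂] − 2([x₁,x₃]⋅[x₂,x₄]) + 2([x₁, [x₃,x₄]]⋅x₂) + [x₁, [x₂,x₄]⋅x₃] + [x₁, [x₂, x₃⋅x₄]] − [x₁, x₂⋅[x₃,x₄]] + 2(x₁⋅[[x₂,x₄], x₃]). -/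
set_option linter.unusedSimpArgs false
theorem stmt_13 {K A : Type*} [Field K] [CharZero K] [AddCommGroup A] [Module K A]
    (mul : A →ₗ[K] A →ₗ[K] A) (br : A →ₗ[K] A →ₗ[K] A)
    (hmul_comm : ∀ x y : A, mul x y = mul y x)
    (hmul_assoc : ∀ x y z : A, mul (mul x y) z = mul x (mul y z))
    (hbr_anti : ∀ x y : A, br x y = - br y x)
    (hbr_jacobi : ∀ x y z : A, br (br x y) z + br (br y z) x + br (br z x) y = 0)
    (htp : ∀ x y z : A, 2 • mul (br x y) z = br (mul x z) y + br x (mul y z)) :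
    ∀ x1 x2 x3 x4 : A,
      br (br x1 x3) (mul x2 x4) =
        br (br x1 (mul x3 x4)) x2 - 2 • mul (br x1 x3) (br x2 x4)
        + 2 • mul (br x1 (br x3 x4)) x2
        + br x1 (mul (br x2 x4) x3) + br x1 (br x2 (mul x3 x4))
        - br x1 (mul x2 (br x3 x4)) + 2 • mul x1 (br (br x2 x4) x3) := by
  intro x1 x2 x3 x4
  have hHb : ∀ x y z w : A, 2 • br (mul (br x y) z) w
      = br (br (mul x z) y) w + br (br x (mul y z)) w := by
    intro x y z w
    have h := congrArg (fun t => br t w) (htp x y z)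
    simpa only [map_add, map_nsmul, LinearMap.add_apply, LinearMap.smul_apply] using h
  have e0 := hbr_jacobi (mul x1 x2) x3 x4
  have e1 := hbr_jacobi (mul x1 x3) x2 x4
  have e2 := htp x1 x3 (br x2 x4)
  have e3 := htp x1 x4 (br x2 x3)
  have e4 := hHb x1 x4 x2 x3
  have e5 := hHb x1 x4 x3 x2
  have e6 := htp x2 x3 (br x1 x4)
  have e7 := hHb x2 x3 x1 x4
  have e8 := hHb x2 x3 x4 x1
  have e9 := hbr_jacobi (mul x2 x4) x1 x3
  have e10 := htp (br x2 x4) x3 x1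
  have e11 := htp (br x3 x4) x1 x2
  simp only [map_neg, LinearMap.neg_apply,
    hbr_anti (mul x1 x2) (br x3 x4),
    hbr_anti (mul x1 x3) (br x2 x4),
    hbr_anti (mul x2 x4) (br x1 x3),
    hbr_anti x1 (br (mul x2 x4) x3),
    hbr_anti x1 (br (mul x3 x4) x2),
    hbr_anti x1 (br x3 x4),
    hbr_anti x1 (mul (br x2 x3) x4),
    hbr_anti x1 (mul (br x2 x4) x3),
    hbr_anti x1 (mul (br x3 x4) x2),
    hbr_anti x1 (mul x2 x4),
    hbr_anti x1 (mul x3 x4),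
    hbr_anti x2 (br (mul x1 x3) x4),
    hbr_anti x2 (br (mul x3 x4) x1),
    hbr_anti x2 (mul (br x1 x4) x3),
    hbr_anti x2 (mul x1 x3),
    hbr_anti x2 (mul x3 x4),
    hbr_anti x3 (br (mul x1 x2) x4),
    hbr_anti x3 (br (mul x2 x4) x1),
    hbr_anti x3 (br x2 x4),
    hbr_anti x3 (mul (br x1 x4) x2),
    hbr_anti x3 (mul (br x2 x4) x1),
    hbr_anti x3 (mul x1 x2),
    hbr_anti x3 (mul x2 x4),
    hbr_anti x3 x1,
    hbr_anti x3 x2,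
    hbr_anti x4 (br (mul x1 x2) x3),
    hbr_anti x4 (br (mul x1 x3) x2),
    hbr_anti x4 (mul (br x2 x3) x1),
    hbr_anti x4 (mul x1 x2),
    hbr_anti x4 (mul x1 x3),
    hbr_anti x4 x1,
    hbr_anti x4 x2,
    hbr_anti x4 x3,
    hmul_comm (br x2 x3) (br x1 x4),
    hmul_comm (br x2 x4) (br x1 x3),
    hmul_comm x1 (br (br x2 x4) x3),
    hmul_comm x1 (br x2 x3),
    hmul_comm x1 (br x2 x4),
    hmul_comm x2 (br (br x3 x4) x1),
    hmul_comm x2 (br x1 x4),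
    hmul_comm x2 (br x3 x4),
    hmul_comm x2 x1,
    hmul_comm x3 (br x1 x4),
    hmul_comm x3 (br x2 x4),
    hmul_comm x3 x1,
    hmul_comm x4 (br x2 x3),
    hmul_comm x4 x2,
    hmul_comm x4 x3]
    at e0 e1 e2 e3 e4 e5 e6 e7 e8 e9 e10 e11 ⊢
  linear_combination (norm := module) (1 : ℤ) • e0 + (-1 : ℤ) • e1 + (1 : ℤ) • e2 + (2 : ℤ) • e3 + (-1 : ℤ) • e4 + (1 : ℤ) • e5 + (-2 : ℤ) • e6 + (1 : ℤ) • e7 + (-1 : ℤ) • e8 + (1 : ℤ) • e9 + (-1 : ℤ) • e10 + (1 : ℤ) • e11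
end

section
/- Let A be a transposed Poisson algebra. Then for all a₁, a₂, a₃, a₄ ∈ A, [a₁⋅a₂, a₃⋅a₄] = [a₁, a₂⋅a₃⋅a₄] + 4(a₁⋅[a₂,a₄]⋅a₃) − 2(a₁⋅[a₂, a₃⋅a₄]) − 2(a₁⋅a₂⋅[a₃,a₄]), where products of three factors are unambiguous by associativity and commutativity of ⋅. -/
theorem stmt_14 {K A : Type*} [Field K] [CharZero K] [AddCommGroup A] [Module K A]
    (mul : A →ₗ[K] A →ₗ[K] A) (br : A →ₗ[K] A →ₗ[K] A)
    (hmul_comm : ∀ x y : A, mul x y = mul y x)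
    (hmul_assoc : ∀ x y z : A, mul (mul x y) z = mul x (mul y z))
    (hbr_anti : ∀ x y : A, br x y = - br y x)
    (hbr_jacobi : ∀ x y z : A, br (br x y) z + br (br y z) x + br (br z x) y = 0)
    (htp : ∀ x y z : A, 2 • mul (br x y) z = br (mul x z) y + br x (mul y z)) :
    ∀ a1 a2 a3 a4 : A,
      br (mul a1 a2) (mul a3 a4) =
        br a1 (mul (mul a2 a3) a4) + 4 • mul (mul a1 (br a2 a4)) a3
        - 2 • mul a1 (br a2 (mul a3 a4)) - 2 • mul (mul a1 a2) (br a3 a4) := by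
  have lc : ∀ x y z : A, mul x (mul y z) = mul y (mul x z) := by
    intro x y z
    rw [← hmul_assoc, hmul_comm x y, hmul_assoc]
  have L : ∀ x y z w : A, br (mul x y) (mul z w) + br (mul x z) (mul y w)
      = br x (mul y (mul z w)) - br w (mul x (mul y z)) := by
    intro x y z w
    have h1 := htp x w (mul y z)
    have h2 := congrArg (fun t => mul t y) (htp x w z)
    have h3 := htp (mul x z) w y
    have h4 := htp x (mul w z) y
    have e1 : mul (mul (br x w) z) y = mul (br x w) (mul y z) := by
      rw [hmul_assoc, hmul_comm z y]
    simp only [map_add, map_nsmul, LinearMap.add_apply, LinearMap.smul_apply, e1] at h2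
    rw [hmul_comm w (mul y z), hmul_assoc y z w] at h1
    rw [hmul_assoc x z y, hmul_comm z y, hmul_comm w y] at h3
    rw [hmul_comm w z, hmul_comm (mul z w) y] at h4
    rw [hmul_comm w z] at h2
    rw [hbr_anti w]
    linear_combination (norm := module) (2 : ℤ) • h1 - (2 : ℤ) • h2 - h3 - h4
  intro a1 a2 a3 a4
  have l1 := L a1 a2 a3 a4
  have l3 := L a2 a1 a4 a3
  have t1 := htp a2 (mul a3 a4) a1
  have t2 := htp a3 a4 (mul a1 a2)
  have t3 := htp a2 a4 (mul a1 a3)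
  have n1 := hbr_anti (mul a2 a4) (mul a1 a3)
  have n2 := hbr_anti (mul a3 (mul a1 a2)) a4
  simp only [hmul_assoc, hmul_comm, lc] at l1 l3 t1 t2 t3 n1 n2 ⊢
  linear_combination (norm := module) l1 + l3 - n1 + t1 + t2 - (2 : ℤ) • t3 - n2
end

section
/- Let A be a transposed Poisson algebra. Then for all a₁, a₂, a₃, a₄ ∈ A, [a₁⋅a₃, a₂⋅a₄] − [a₁⋅a₄, a₂⋅a₃] = −2(a₁⋅a₂⋅[a₃,a₄]) − 2(a₁⋅[a₂⋅a₄, a₃]) + 2(a₁⋅[a₂⋅a₃, a₄]), where products of three factors are unambiguous by associativity and commutativity of ⋅. -/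
theorem stmt_16 {K A : Type*} [Field K] [CharZero K] [AddCommGroup A] [Module K A]
    (mul : A →ₗ[K] A →ₗ[K] A) (br : A →ₗ[K] A →ₗ[K] A)
    (hmul_comm : ∀ x y : A, mul x y = mul y x)
    (hmul_assoc : ∀ x y z : A, mul (mul x y) z = mul x (mul y z))
    (hbr_anti : ∀ x y : A, br x y = - br y x)
    (hbr_jacobi : ∀ x y z : A, br (br x y) z + br (br y z) x + br (br z x) y = 0)
    (htp : ∀ x y z : A, 2 • mul (br x y) z = br (mul x z) y + br x (mul y z)) :
    ∀ a1 a2 a3 a4 : A,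
      br (mul a1 a3) (mul a2 a4) - br (mul a1 a4) (mul a2 a3) =
        - (2 • mul (mul a1 a2) (br a3 a4)) - 2 • mul a1 (br (mul a2 a4) a3)
        + 2 • mul a1 (br (mul a2 a3) a4) := by
  intro a1 a2 a3 a4
  have h1 := htp (mul a2 a3) a4 a1
  have h2 := htp (mul a2 a4) a3 a1
  have h3 := htp a3 a4 (mul a1 a2)
  rw [hmul_comm _ a1, hmul_comm _ a1, hmul_comm _ a1] at h1 h2
  rw [hmul_comm _ (mul a1 a2), hmul_comm _ (mul a1 a2), hmul_comm _ (mul a1 a2),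
    hmul_assoc a1 a2 a3, hmul_assoc a1 a2 a4] at h3
  rw [h1, h2, h3, hbr_anti a3 (mul a1 (mul a2 a4)), hbr_anti (mul a2 a4) (mul a1 a3),
    hbr_anti (mul a2 a3) (mul a1 a4)]
  abel
end
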